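/- arXiv:1904.06223 — 3 statements merged into one kernel-verified Lean document; each statement's English description precedes it below -/
import Mathlib

section
/- Let α > -1 and 0 < p < α + 2. For z ∈ 𝔻 define f_z(ω) = (1-|z|²)^{(α+2)/p} / (1-z̄ω)^{2(α+2)/p-1} for ω ∈ 𝔻. Then there is a constant C > 0 independent of z such that ‖f_z‖_{D^p_α} ≤ C for all z ∈ 𝔻; moreover f_z(z) = 1/(1-|z|²)^{(α+2-p)/p} and f'_z(z) = (z̄(2(α+2)-p)/p) · 1/(1-|z|²)^{(α+2)/p}. -/
/-!
Let `φ_z(w) = (z - w) / (1 - z̄w)` be the involutive automorphism of the disk exchanging `0` and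
`z`. Up to the constant factor `|2(α+2)/p - 1| |z|`, the modulus of `f_z'` is `|φ_z'| ^ ((α+2)/p)`.
Since `(1 - |w|²) |φ_z'(w)| = 1 - |φ_z(w)|²`, the integrand of the Dirichlet integral of `f_z` is
thus a multiple of `|φ_z'(w)|² (1 - |φ_z(w)|²)^α`, and the change of variables `u = φ_z(w)` turns
the integral into `∫_𝔻 (1 - |u|²)^α dA(u)`, which does not depend on `z` and is finite as `α > -1`.
-/

open MeasureTheory Metric Set Filter Topology ENNReal

noncomputable section

/-- The open unit disk in ℂ. -/
def unitDisk : Set ℂ := Metric.ball (0 : ℂ) 1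

/-- The normalized Lebesgue area measure `dA = (1/π) dx dy` on ℂ. -/
def areaMeasure : Measure ℂ := (ENNReal.ofReal (Real.pi)⁻¹) • (volume : Measure ℂ)

/-- `∫_𝔻 |f'(z)|^p (1-|z|²)^α dA(z)`, as an extended nonnegative real. -/
def dirichletLintegral (p α : ℝ) (f : ℂ → ℂ) : ℝ≥0∞ :=
  ∫⁻ z in unitDisk, ENNReal.ofReal (‖deriv f z‖ ^ p * (1 - ‖z‖ ^ 2) ^ α) ∂areaMeasure

/-- Membership in the weighted Dirichlet space `D^p_α`: analytic on 𝔻 with finite norm. -/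
def MemDirichlet (p α : ℝ) (f : ℂ → ℂ) : Prop :=
  DifferentiableOn ℂ f unitDisk ∧ dirichletLintegral p α f < ⊤

/-- The norm of the weighted Dirichlet space `D^p_α`:
`(|f(0)|^p + ∫_𝔻 |f'(z)|^p (1-|z|²)^α dA(z))^{1/p}`. -/
def dirichletNorm (p α : ℝ) (f : ℂ → ℂ) : ℝ :=
  (‖f 0‖ ^ p + (dirichletLintegral p α f).toReal) ^ (1 / p)

/-- The test function `f_z(ω) = (1-|z|²)^{(α+2)/p} / (1 - z̄ω)^{2(α+2)/p - 1}`. -/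
def testFn (p α : ℝ) (z : ℂ) : ℂ → ℂ := fun ω =>
  (((1 - ‖z‖ ^ 2) ^ ((α + 2) / p) : ℝ) : ℂ) /
    (1 - (starRingEnd ℂ) z * ω) ^ ((2 * (α + 2) / p - 1 : ℝ) : ℂ)

open scoped ComplexConjugate

lemma integrableOn_one_sub_norm_sq_rpow {E : Type*} [NormedAddCommGroup E] [NormedSpace ℝ E]
    [Nontrivial E] [FiniteDimensional ℝ E] [MeasurableSpace E] [BorelSpace E] (μ : Measure E)
    [μ.IsAddHaarMeasure] {α : ℝ} (hα : -1 < α) :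
    IntegrableOn (fun x : E ↦ (1 - ‖x‖ ^ 2) ^ α) (ball 0 1) μ := by
  rw [integrableOn_fun_norm_addHaar μ (f := fun r ↦ (1 - r ^ 2) ^ α),
    ← intervalIntegrable_iff_integrableOn_Ioo_of_le zero_le_one]
  have h_sing : IntervalIntegrable (fun r : ℝ ↦ (1 - r) ^ α) volume 0 1 := by
    have h := intervalIntegral.intervalIntegrable_rpow' (a := 0) (b := 1) hα
    simpa using (h.comp_sub_left 1).symm
  have h_cont : ContinuousOn (fun r : ℝ ↦ r ^ (Module.finrank ℝ E - 1) * (1 + r) ^ α)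
      (uIcc 0 1) := by
    rw [uIcc_of_le zero_le_one]
    refine (continuousOn_id.pow _).mul (ContinuousOn.rpow_const (by fun_prop) ?_)
    exact fun r hr ↦ .inl (by linarith [hr.1])
  refine (h_sing.continuousOn_mul h_cont).congr ?_
  intro r hr
  rw [uIoc_of_le zero_le_one] at hr
  have h_factor : 1 - r ^ 2 = (1 + r) * (1 - r) := by ring
  simp only [smul_eq_mul, mul_assoc]
  rw [h_factor, Real.mul_rpow (by linarith [hr.1]) (by linarith [hr.2])]

lemma det_restrictScalars_toSpanSingleton (c : ℂ) :
    ((ContinuousLinearMap.toSpanSingleton ℂ c).restrictScalars ℝ).det = ‖c‖ ^ 2 := by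
  simp [ContinuousLinearMap.det, LinearMap.det_restrictScalars, Algebra.norm_complex_apply,
    Complex.normSq_eq_norm_sq]

lemma lintegral_image_eq_lintegral_norm_deriv_sq_mul (μ : Measure ℂ) [μ.IsAddHaarMeasure]
    {s : Set ℂ} {f f' : ℂ → ℂ} (hs : MeasurableSet s)
    (hf' : ∀ w ∈ s, HasDerivWithinAt f (f' w) s w) (hf : InjOn f s) (g : ℂ → ℝ≥0∞) :
    ∫⁻ u in f '' s, g u ∂μ = ∫⁻ w in s, ENNReal.ofReal (‖f' w‖ ^ 2) * g (f w) ∂μ := by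
  have h := lintegral_image_eq_lintegral_abs_det_fderiv_mul μ hs
    (fun w hw ↦ (hf' w hw).hasFDerivWithinAt.restrictScalars ℝ) hf g
  simpa only [det_restrictScalars_toSpanSingleton, abs_sq] using h

instance : areaMeasure.IsAddHaarMeasure :=
  Measure.IsAddHaarMeasure.smul _ (by simpa using Real.pi_pos) ENNReal.ofReal_ne_top

section Disk

variable {z w : ℂ}

lemma mem_unitDisk : z ∈ unitDisk ↔ ‖z‖ < 1 := mem_ball_zero_iff

lemma measurableSet_unitDisk : MeasurableSet unitDisk := measurableSet_ball

lemma mem_unitDisk_iff_one_sub_norm_sq_pos : z ∈ unitDisk ↔ 0 < 1 - ‖z‖ ^ 2 := by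
  rw [mem_unitDisk, sub_pos, sq_lt_one_iff₀ (norm_nonneg z)]

lemma one_sub_conj_mul_mem_slitPlane (hz : z ∈ unitDisk) (hw : w ∈ unitDisk) :
    1 - conj z * w ∈ Complex.slitPlane := by
  rw [mem_unitDisk] at hz hw
  have h_re : (conj z * w).re < 1 := calc
    (conj z * w).re ≤ ‖conj z * w‖ := Complex.re_le_norm _
    _ = ‖z‖ * ‖w‖ := by rw [norm_mul, RCLike.norm_conj]
    _ < 1 := mul_lt_one_of_nonneg_of_lt_one_left (norm_nonneg z) hz hw.le
  left
  simpa using h_re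

lemma one_sub_conj_mul_ne_zero (hz : z ∈ unitDisk) (hw : w ∈ unitDisk) :
    1 - conj z * w ≠ 0 :=
  Complex.slitPlane_ne_zero (one_sub_conj_mul_mem_slitPlane hz hw)

lemma one_sub_conj_mul_self (z : ℂ) : 1 - conj z * z = ((1 - ‖z‖ ^ 2 : ℝ) : ℂ) := by
  rw [Complex.conj_mul']
  push_cast
  rfl

lemma hasDerivAt_one_sub_conj_mul (z w : ℂ) :
    HasDerivAt (fun w ↦ 1 - conj z * w) (-conj z) w := by
  simpa using ((hasDerivAt_id w).const_mul (conj z)).const_sub 1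

end Disk

section DiskInvolution

variable {z w : ℂ}

/-- The involutive Möbius automorphism `φ_z(w) = (z - w) / (1 - z̄w)` of the unit disk that
exchanges `0` and `z`, used as a change of variables in the Dirichlet integral. -/
def diskInvolution (z w : ℂ) : ℂ := (z - w) / (1 - conj z * w)

lemma one_sub_norm_sq_diskInvolution (h : 1 - conj z * w ≠ 0) :
    1 - ‖diskInvolution z w‖ ^ 2 = (1 - ‖z‖ ^ 2) * (1 - ‖w‖ ^ 2) / ‖1 - conj z * w‖ ^ 2 := by
  have h_norm : ‖1 - conj z * w‖ ^ 2 ≠ 0 := by simpa using h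
  rw [diskInvolution, norm_div, div_pow, _root_.eq_div_iff h_norm, sub_mul,
    div_mul_cancel₀ _ h_norm]
  simp [← Complex.normSq_eq_norm_sq, Complex.normSq_apply]
  ring

lemma mapsTo_diskInvolution (hz : z ∈ unitDisk) :
    MapsTo (diskInvolution z) unitDisk unitDisk := by
  intro w hw
  have h_ne := one_sub_conj_mul_ne_zero hz hw
  rw [mem_unitDisk_iff_one_sub_norm_sq_pos] at hz hw ⊢
  rw [one_sub_norm_sq_diskInvolution h_ne]
  positivity

lemma diskInvolution_diskInvolution (hz : z ∈ unitDisk) (hw : w ∈ unitDisk) :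
    diskInvolution z (diskInvolution z w) = w := by
  have h_ne := one_sub_conj_mul_ne_zero hz hw
  have h_ne' := one_sub_conj_mul_ne_zero hz (mapsTo_diskInvolution hz hw)
  have h_mul : diskInvolution z w * (1 - conj z * w) = z - w := div_mul_cancel₀ _ h_ne
  rw [diskInvolution, div_eq_iff h_ne']
  linear_combination -h_mul

lemma bijOn_diskInvolution (hz : z ∈ unitDisk) :
    BijOn (diskInvolution z) unitDisk unitDisk :=
  InvOn.bijOn ⟨fun _ ↦ diskInvolution_diskInvolution hz, fun _ ↦ diskInvolution_diskInvolution hz⟩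
    (mapsTo_diskInvolution hz) (mapsTo_diskInvolution hz)

lemma hasDerivAt_diskInvolution (h : 1 - conj z * w ≠ 0) :
    HasDerivAt (diskInvolution z) (-((1 - ‖z‖ ^ 2 : ℝ) : ℂ) / (1 - conj z * w) ^ 2) w := by
  refine (((hasDerivAt_id w).const_sub z).div (hasDerivAt_one_sub_conj_mul z w) h).congr_deriv ?_
  rw [← one_sub_conj_mul_self, id]
  ring

lemma norm_deriv_diskInvolution (hz : z ∈ unitDisk) (hw : w ∈ unitDisk) :
    ‖deriv (diskInvolution z) w‖ = (1 - ‖z‖ ^ 2) / ‖1 - conj z * w‖ ^ 2 := by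
  rw [(hasDerivAt_diskInvolution (one_sub_conj_mul_ne_zero hz hw)).deriv, norm_div, norm_neg,
    norm_pow, Complex.norm_of_nonneg (mem_unitDisk_iff_one_sub_norm_sq_pos.1 hz).le]

lemma norm_deriv_diskInvolution_mul (hz : z ∈ unitDisk) (hw : w ∈ unitDisk) :
    ‖deriv (diskInvolution z) w‖ * (1 - ‖w‖ ^ 2) = 1 - ‖diskInvolution z w‖ ^ 2 := by
  rw [norm_deriv_diskInvolution hz hw,
    one_sub_norm_sq_diskInvolution (one_sub_conj_mul_ne_zero hz hw), div_mul_eq_mul_div]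

lemma norm_deriv_diskInvolution_pos (hz : z ∈ unitDisk) (hw : w ∈ unitDisk) :
    0 < ‖deriv (diskInvolution z) w‖ := by
  have h_ne := one_sub_conj_mul_ne_zero hz hw
  rw [norm_deriv_diskInvolution hz hw]
  rw [mem_unitDisk_iff_one_sub_norm_sq_pos] at hz
  positivity

lemma lintegral_norm_deriv_diskInvolution_rpow (μ : Measure ℂ) [μ.IsAddHaarMeasure] (α : ℝ)
    (hz : z ∈ unitDisk) :
    ∫⁻ w in unitDisk,
        ENNReal.ofReal (‖deriv (diskInvolution z) w‖ ^ (α + 2) * (1 - ‖w‖ ^ 2) ^ α) ∂μ =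
      ∫⁻ w in unitDisk, ENNReal.ofReal ((1 - ‖w‖ ^ 2) ^ α) ∂μ := by
  have h_bij := bijOn_diskInvolution hz
  have h_deriv (w) (hw : w ∈ unitDisk) := (hasDerivAt_diskInvolution
    (one_sub_conj_mul_ne_zero hz hw)).differentiableAt.hasDerivAt.hasDerivWithinAt (s := unitDisk)
  conv_rhs => rw [← h_bij.image_eq]
  rw [lintegral_image_eq_lintegral_norm_deriv_sq_mul μ measurableSet_unitDisk h_deriv h_bij.injOn]
  refine setLIntegral_congr_fun measurableSet_unitDisk fun w hw ↦ ?_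
  have h_pos := norm_deriv_diskInvolution_pos hz hw
  simp only [← norm_deriv_diskInvolution_mul hz hw]
  rw [← ENNReal.ofReal_mul (sq_nonneg _), Real.rpow_add h_pos, Real.rpow_two,
    Real.mul_rpow h_pos.le (mem_unitDisk_iff_one_sub_norm_sq_pos.1 hw).le]
  congr 1
  ring

end DiskInvolution

/-- The total mass `∫_𝔻 (1-|w|²)^α dA(w)` of the weight of `D^p_α`. -/
def diskWeightMass (α : ℝ) : ℝ≥0∞ :=
  ∫⁻ w in unitDisk, ENNReal.ofReal ((1 - ‖w‖ ^ 2) ^ α) ∂areaMeasure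

lemma diskWeightMass_lt_top {α : ℝ} (hα : -1 < α) : diskWeightMass α < ⊤ :=
  (integrableOn_one_sub_norm_sq_rpow areaMeasure hα).lintegral_lt_top

section TestFn

variable {p α : ℝ} {z w : ℂ}

lemma hasDerivAt_testFn (p α : ℝ) (hz : z ∈ unitDisk) (hw : w ∈ unitDisk) :
    HasDerivAt (testFn p α z)
      (conj z * ((2 * (α + 2) / p - 1 : ℝ) : ℂ) * (((1 - ‖z‖ ^ 2) ^ ((α + 2) / p) : ℝ) : ℂ) *
        (1 - conj z * w) ^ ((-(2 * (α + 2) / p) : ℝ) : ℂ)) w := by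
  set s : ℝ := 2 * (α + 2) / p - 1 with hs
  have h_fun : testFn p α z = fun w ↦ (((1 - ‖z‖ ^ 2) ^ ((α + 2) / p) : ℝ) : ℂ) *
      (1 - conj z * w) ^ (-(s : ℂ)) := by
    funext w
    rw [testFn, Complex.cpow_neg, div_eq_mul_inv]
  have h_exp : -(s : ℂ) - 1 = ((-(2 * (α + 2) / p) : ℝ) : ℂ) := by
    rw [hs]
    push_cast
    ring
  have h_cpow := (hasDerivAt_one_sub_conj_mul z w).cpow_const (c := -(s : ℂ))
    (one_sub_conj_mul_mem_slitPlane hz hw)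
  rw [h_exp] at h_cpow
  rw [h_fun]
  refine (h_cpow.const_mul _).congr_deriv ?_
  ring

lemma differentiableOn_testFn (p α : ℝ) (hz : z ∈ unitDisk) :
    DifferentiableOn ℂ (testFn p α z) unitDisk :=
  fun _ hw ↦ (hasDerivAt_testFn p α hz hw).differentiableAt.differentiableWithinAt

lemma norm_deriv_testFn (p α : ℝ) (hz : z ∈ unitDisk) (hw : w ∈ unitDisk) :
    ‖deriv (testFn p α z) w‖ =
      ‖z‖ * |2 * (α + 2) / p - 1| * ‖deriv (diskInvolution z) w‖ ^ ((α + 2) / p) := by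
  have h_pos := mem_unitDisk_iff_one_sub_norm_sq_pos.1 hz
  have h_rpow : ‖deriv (diskInvolution z) w‖ ^ ((α + 2) / p) =
      (1 - ‖z‖ ^ 2) ^ ((α + 2) / p) * ‖1 - conj z * w‖ ^ (-(2 * (α + 2) / p)) := by
    rw [norm_deriv_diskInvolution hz hw, Real.div_rpow h_pos.le (sq_nonneg _),
      ← Real.rpow_natCast_mul (norm_nonneg _), div_eq_mul_inv, Real.rpow_neg (norm_nonneg _),
      Nat.cast_ofNat, mul_div_assoc]
  rw [(hasDerivAt_testFn p α hz hw).deriv, h_rpow, norm_mul, norm_mul, norm_mul, RCLike.norm_conj,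
    Complex.norm_real, Real.norm_eq_abs, Complex.norm_of_nonneg (by positivity),
    Complex.norm_cpow_real, mul_assoc _ (_ ^ _)]

lemma dirichletLintegral_testFn (α : ℝ) (hp : p ≠ 0) (hz : z ∈ unitDisk) :
    dirichletLintegral p α (testFn p α z) =
      ENNReal.ofReal ((‖z‖ * |2 * (α + 2) / p - 1|) ^ p) * diskWeightMass α := by
  rw [diskWeightMass, ← lintegral_norm_deriv_diskInvolution_rpow areaMeasure α hz,
    ← lintegral_const_mul' _ _ ENNReal.ofReal_ne_top]
  refine setLIntegral_congr_fun measurableSet_unitDisk fun w hw ↦ ?_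
  simp only [norm_deriv_testFn p α hz hw]
  rw [← ENNReal.ofReal_mul (by positivity), Real.mul_rpow (by positivity) (by positivity),
    ← Real.rpow_mul (norm_nonneg _), div_mul_cancel₀ _ hp, mul_assoc]

lemma memDirichlet_testFn (hα : -1 < α) (hp : p ≠ 0) (hz : z ∈ unitDisk) :
    MemDirichlet p α (testFn p α z) := by
  refine ⟨differentiableOn_testFn p α hz, ?_⟩
  rw [dirichletLintegral_testFn α hp hz]
  exact ENNReal.mul_lt_top ENNReal.ofReal_lt_top (diskWeightMass_lt_top hα)

lemma norm_testFn_zero_le_one (h : 0 ≤ (α + 2) / p) (hz : z ∈ unitDisk) :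
    ‖testFn p α z 0‖ ≤ 1 := by
  have h_pos := mem_unitDisk_iff_one_sub_norm_sq_pos.1 hz
  have h_eq : ‖testFn p α z 0‖ = (1 - ‖z‖ ^ 2) ^ ((α + 2) / p) := by
    simp only [testFn, mul_zero, sub_zero, Complex.one_cpow, div_one]
    exact Complex.norm_of_nonneg (by positivity)
  rw [h_eq]
  exact Real.rpow_le_one h_pos.le (sub_le_self _ (sq_nonneg _)) h

lemma dirichletNorm_testFn_le (hα : -1 < α) (hp : 0 < p) (hz : z ∈ unitDisk) :
    dirichletNorm p α (testFn p α z) ≤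
      (1 + |2 * (α + 2) / p - 1| ^ p * (diskWeightMass α).toReal) ^ (1 / p) := by
  have h_zero : ‖testFn p α z 0‖ ^ p ≤ 1 :=
    Real.rpow_le_one (norm_nonneg _)
      (norm_testFn_zero_le_one (div_nonneg (by linarith) hp.le) hz) hp.le
  have h_factor : ‖z‖ * |2 * (α + 2) / p - 1| ≤ |2 * (α + 2) / p - 1| :=
    mul_le_of_le_one_left (abs_nonneg _) (mem_unitDisk.1 hz).le
  rw [dirichletNorm, dirichletLintegral_testFn α hp.ne' hz, ENNReal.toReal_mul,
    ENNReal.toReal_ofReal (by positivity)]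
  gcongr

lemma testFn_self (α : ℝ) (hp : p ≠ 0) (hz : z ∈ unitDisk) :
    testFn p α z z = ((1 / (1 - ‖z‖ ^ 2) ^ ((α + 2 - p) / p) : ℝ) : ℂ) := by
  have h_pos := mem_unitDisk_iff_one_sub_norm_sq_pos.1 hz
  have h_exp : (α + 2) / p - (2 * (α + 2) / p - 1) = -((α + 2 - p) / p) := by
    field_simp
    ring
  rw [testFn, one_sub_conj_mul_self, ← Complex.ofReal_cpow h_pos.le, ← Complex.ofReal_div,
    ← Real.rpow_sub h_pos, h_exp, Real.rpow_neg h_pos.le, one_div]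

lemma deriv_testFn_self (α : ℝ) (hp : p ≠ 0) (hz : z ∈ unitDisk) :
    deriv (testFn p α z) z = conj z * (((2 * (α + 2) - p) / p : ℝ) : ℂ) *
      ((1 / (1 - ‖z‖ ^ 2) ^ ((α + 2) / p) : ℝ) : ℂ) := by
  have h_pos := mem_unitDisk_iff_one_sub_norm_sq_pos.1 hz
  have h_coeff : 2 * (α + 2) / p - 1 = (2 * (α + 2) - p) / p := by field_simp
  have h_exp : (α + 2) / p + -(2 * (α + 2) / p) = -((α + 2) / p) := by ring
  rw [(hasDerivAt_testFn p α hz hz).deriv, one_sub_conj_mul_self,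
    ← Complex.ofReal_cpow h_pos.le, mul_assoc, ← Complex.ofReal_mul, ← Real.rpow_add h_pos,
    h_exp, Real.rpow_neg h_pos.le, one_div, h_coeff]

end TestFn

theorem testFn_dirichlet_bounded_general (p α : ℝ) (hα : -1 < α) (hp : 0 < p) :
    ∃ C : ℝ, 0 < C ∧ ∀ z ∈ unitDisk,
      MemDirichlet p α (testFn p α z) ∧
      dirichletNorm p α (testFn p α z) ≤ C ∧
      testFn p α z z = ((1 / (1 - ‖z‖ ^ 2) ^ ((α + 2 - p) / p) : ℝ) : ℂ) ∧
      deriv (testFn p α z) z =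
        conj z * (((2 * (α + 2) - p) / p : ℝ) : ℂ) *
          ((1 / (1 - ‖z‖ ^ 2) ^ ((α + 2) / p) : ℝ) : ℂ) :=
  ⟨(1 + |2 * (α + 2) / p - 1| ^ p * (diskWeightMass α).toReal) ^ (1 / p), by positivity,
    fun _ hz ↦ ⟨memDirichlet_testFn hα hp.ne' hz, dirichletNorm_testFn_le hα hp hz,
      testFn_self α hp.ne' hz, deriv_testFn_self α hp.ne' hz⟩⟩

/-- The test functions `f_z` have uniformly bounded `D^p_α` norm, with
`f_z(z) = (1-|z|²)^{-(α+2-p)/p}` and `f'_z(z) = z̄ (2(α+2)-p)/p · (1-|z|²)^{-(α+2)/p}`. -/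
theorem testFn_dirichlet_bounded (p α : ℝ) (hα : -1 < α) (hp : 0 < p) (hpα : p < α + 2) :
    ∃ C : ℝ, 0 < C ∧ ∀ z ∈ unitDisk,
      MemDirichlet p α (testFn p α z) ∧
      dirichletNorm p α (testFn p α z) ≤ C ∧
      testFn p α z z = ((1 / (1 - ‖z‖ ^ 2) ^ ((α + 2 - p) / p) : ℝ) : ℂ) ∧
      deriv (testFn p α z) z =
        (starRingEnd ℂ) z * (((2 * (α + 2) - p) / p : ℝ) : ℂ) *
          ((1 / (1 - ‖z‖ ^ 2) ^ ((α + 2) / p) : ℝ) : ℂ) :=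
  testFn_dirichlet_bounded_general p α hα hp
end
end

section
/- Let 0 < p < 1. For z ∈ 𝔻 define f_z(ω) = (1-|z|²)^{1/p} / (1-z̄ω)^{2/p-1} for ω ∈ 𝔻. Then there is a constant C > 0 independent of z such that ‖f_z‖_{S^p} ≤ C for all z ∈ 𝔻, and f_z(z) = 1/(1-|z|²)^{1/p-1}. -/
open MeasureTheory Metric Set Filter Topology ENNReal

noncomputable section

/-- The normalized Lebesgue measure on the unit circle, parameterized by the angle
`θ ∈ (0, 2π]`. -/
def circleMeasure : Measure ℝ :=
  (ENNReal.ofReal (2 * Real.pi)⁻¹) • (volume.restrict (Set.Ioc 0 (2 * Real.pi)))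

/-- `∫_{∂𝔻} |f(r ξ)|^p dm(ξ)`, as an extended nonnegative real. -/
def hardyLintegral (p : ℝ) (f : ℂ → ℂ) (r : ℝ) : ℝ≥0∞ :=
  ∫⁻ θ, ENNReal.ofReal (‖f ((r : ℂ) * Complex.exp ((θ : ℂ) * Complex.I))‖ ^ p) ∂circleMeasure

/-- `sup_{0 ≤ r < 1} ∫_{∂𝔻} |f(r ξ)|^p dm(ξ)`. -/
def hardySup (p : ℝ) (f : ℂ → ℂ) : ℝ≥0∞ :=
  ⨆ r : Set.Ico (0 : ℝ) 1, hardyLintegral p f r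

/-- Membership in the derivative Hardy space `S^p`: analytic on 𝔻 with `f' ∈ H^p`. -/
def MemS (p : ℝ) (f : ℂ → ℂ) : Prop :=
  DifferentiableOn ℂ f unitDisk ∧ hardySup p (deriv f) < ⊤

/-- The norm of the derivative Hardy space `S^p`: `|f(0)| + ‖f'‖_{H^p}`. -/
def sNorm (p : ℝ) (f : ℂ → ℂ) : ℝ :=
  ‖f 0‖ + ((hardySup p (deriv f)).toReal) ^ (1 / p)

/-- The test function `f_z(ω) = (1-|z|²)^{1/p} / (1 - z̄ω)^{2/p - 1}`. -/
def testFnS (p : ℝ) (z : ℂ) : ℂ → ℂ := fun ω =>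
  (((1 - ‖z‖ ^ 2) ^ (1 / p) : ℝ) : ℂ) /
    (1 - (starRingEnd ℂ) z * ω) ^ ((2 / p - 1 : ℝ) : ℂ)

/-!
Differentiating `f_z` raises the exponent of the denominator to `2/p`, so that `|f_z'|^p` is a
multiple, bounded in `z`, of `(1 - |z|²) / |1 - z̄ω|²`. On the circle `|ω| = r` this quotient is
dominated by the Poisson kernel of the disk at the point `rz`, which has mean `1`.
-/

lemma poissonKernel_nonneg {c w ξ : ℂ} (h : ‖w - c‖ ≤ ‖ξ - c‖) : 0 ≤ poissonKernel c w ξ :=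
  div_nonneg (sub_nonneg.mpr (by gcongr)) (sq_nonneg _)

lemma circleIntegrable_poissonKernel {c w : ℂ} {R : ℝ} (hw : w ∈ ball c R) :
    CircleIntegrable (poissonKernel c w) c R := by
  rw [poissonKernel_eq_re_herglotzRieszKernel]
  exact (Complex.continuous_re.comp_continuousOn
    (continuousOn_herglotzRieszKernel_sphere hw)).circleIntegrable'

lemma circleAverage_poissonKernel {c w : ℂ} {R : ℝ} (hw : w ∈ ball c R) :
    Real.circleAverage (poissonKernel c w) c R = 1 := by
  have hharmonic : InnerProductSpace.HarmonicOnNhd (1 : ℂ → ℝ) (closedBall c R) :=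
    InnerProductSpace.harmonicOnNhd_const 1
  simpa only [smul_eq_mul, mul_one, Pi.one_apply] using
    hharmonic.circleAverage_poissonKernel_smul hw

lemma lintegral_ofReal_circleMap_circleMeasure {g : ℂ → ℝ} {c : ℂ} {R : ℝ}
    (hg : CircleIntegrable g c R) (hg_nonneg : ∀ ξ ∈ sphere c |R|, 0 ≤ g ξ) :
    ∫⁻ θ, ENNReal.ofReal (g (circleMap c R θ)) ∂circleMeasure =
      ENNReal.ofReal (Real.circleAverage g c R) := by
  rw [circleMeasure, lintegral_smul_measure, ← ofReal_integral_eq_lintegral_ofReal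
      ((intervalIntegrable_iff_integrableOn_Ioc_of_le Real.two_pi_pos.le).mp hg)
      (Eventually.of_forall fun θ => hg_nonneg _ (circleMap_mem_sphere' c R θ)),
    smul_eq_mul, ← intervalIntegral.integral_of_le Real.two_pi_pos.le,
    ← ENNReal.ofReal_mul (by positivity), Real.circleAverage_def, smul_eq_mul]

lemma lintegral_poissonKernel_circleMeasure {w : ℂ} (hw : ‖w‖ < 1) :
    ∫⁻ θ, ENNReal.ofReal (poissonKernel 0 w (circleMap 0 1 θ)) ∂circleMeasure = 1 := by
  have hw' : w ∈ ball (0 : ℂ) 1 := mem_ball_zero_iff.mpr hw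
  rw [lintegral_ofReal_circleMap_circleMeasure (circleIntegrable_poissonKernel hw'),
    circleAverage_poissonKernel hw', ENNReal.ofReal_one]
  intro ξ hξ
  have hξ1 : ‖ξ‖ = 1 := by simpa using hξ
  exact poissonKernel_nonneg (by simpa [hξ1] using hw.le)

lemma hardyLintegral_le_of_le_poissonKernel {p r K : ℝ} {f : ℂ → ℂ} {w : ℂ} (hK : 0 ≤ K)
    (hw : ‖w‖ < 1) (h : ∀ ξ : ℂ, ‖ξ‖ = 1 → ‖f (r * ξ)‖ ^ p ≤ K * poissonKernel 0 w ξ) :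
    hardyLintegral p f r ≤ ENNReal.ofReal K := by
  calc hardyLintegral p f r
      ≤ ∫⁻ θ, ENNReal.ofReal K * ENNReal.ofReal (poissonKernel 0 w (circleMap 0 1 θ))
          ∂circleMeasure := by
        refine lintegral_mono fun θ => ?_
        rw [← ENNReal.ofReal_mul hK, circleMap_zero, Complex.ofReal_one, one_mul]
        exact ENNReal.ofReal_le_ofReal (h _ (Complex.norm_exp_ofReal_mul_I θ))
    _ = ENNReal.ofReal K := by
        rw [lintegral_const_mul' _ _ ENNReal.ofReal_ne_top,
          lintegral_poissonKernel_circleMeasure hw, mul_one]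

lemma sNorm_le_add {p A B : ℝ} {f : ℂ → ℂ} (hp : 0 < p) (hB : 0 ≤ B) (hf0 : ‖f 0‖ ≤ A)
    (hf' : hardySup p (deriv f) ≤ ENNReal.ofReal (B ^ p)) : sNorm p f ≤ A + B := by
  refine add_le_add hf0 ?_
  calc (hardySup p (deriv f)).toReal ^ (1 / p)
      ≤ (B ^ p) ^ (1 / p) := by
        gcongr
        exact ENNReal.toReal_le_of_le_ofReal (by positivity) hf'
    _ = B := by rw [one_div, Real.rpow_rpow_inv hB hp.ne']

lemma norm_sub_eq_norm_one_sub_conj_mul {ξ : ℂ} (hξ : ‖ξ‖ = 1) (w : ℂ) :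
    ‖ξ - w‖ = ‖1 - (starRingEnd ℂ) w * ξ‖ := by
  have hfactor : ξ - w = ξ * (starRingEnd ℂ) (1 - (starRingEnd ℂ) w * ξ) := by
    have hunit : ξ * (starRingEnd ℂ) ξ = 1 := by simp [Complex.mul_conj', hξ]
    simp only [map_sub, map_one, map_mul, Complex.conj_conj]
    linear_combination w * hunit
  rw [hfactor, norm_mul, hξ, one_mul, RCLike.norm_conj]

lemma one_sub_norm_sq_div_le_poissonKernel {z ξ : ℂ} {r : ℝ} (hr : |r| ≤ 1) (hξ : ‖ξ‖ = 1) :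
    (1 - ‖z‖ ^ 2) / ‖1 - (starRingEnd ℂ) z * (r * ξ)‖ ^ 2 ≤ poissonKernel 0 (r * z) ξ := by
  have hdenom : ‖1 - (starRingEnd ℂ) z * (r * ξ)‖ = ‖ξ - r * z‖ := by
    rw [norm_sub_eq_norm_one_sub_conj_mul hξ, map_mul, Complex.conj_ofReal]
    ring_nf
  have hnorm : ‖(r : ℂ) * z‖ ≤ ‖z‖ := by
    rw [norm_mul, Complex.norm_real]
    exact mul_le_of_le_one_left (norm_nonneg z) hr
  simp only [poissonKernel_def, sub_zero, hξ, one_pow, hdenom]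
  gcongr

lemma one_sub_conj_mul_mem_slitPlane_s17 {z ω : ℂ} (hz : ‖z‖ < 1) (hω : ‖ω‖ < 1) :
    1 - (starRingEnd ℂ) z * ω ∈ Complex.slitPlane := by
  rw [sub_eq_add_neg]
  refine Complex.mem_slitPlane_of_norm_lt_one ?_
  rw [norm_neg, norm_mul, RCLike.norm_conj]
  exact mul_lt_one_of_nonneg_of_lt_one_left (norm_nonneg z) hz hω.le

lemma hasDerivAt_testFnS (p : ℝ) {z ω : ℂ} (hz : ‖z‖ < 1) (hω : ‖ω‖ < 1) :
    HasDerivAt (testFnS p z)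
      (((1 - ‖z‖ ^ 2) ^ (1 / p) : ℝ) * ((-(2 / p - 1) : ℝ) *
        (1 - (starRingEnd ℂ) z * ω) ^ ((-(2 / p) : ℝ) : ℂ) * -(starRingEnd ℂ) z)) ω := by
  have hbase : HasDerivAt (fun ω => 1 - (starRingEnd ℂ) z * ω) (-(starRingEnd ℂ) z) ω := by
    simpa using ((hasDerivAt_id ω).const_mul ((starRingEnd ℂ) z)).const_sub 1
  have hfun : testFnS p z = fun ω => (((1 - ‖z‖ ^ 2) ^ (1 / p) : ℝ) : ℂ) *
      (1 - (starRingEnd ℂ) z * ω) ^ ((-(2 / p - 1) : ℝ) : ℂ) := by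
    funext ω
    simp only [testFnS, Complex.ofReal_neg, Complex.cpow_neg, div_eq_mul_inv]
  have hexp : ((-(2 / p) : ℝ) : ℂ) = ((-(2 / p - 1) : ℝ) : ℂ) - 1 := by
    push_cast
    ring
  rw [hfun, hexp]
  exact (hbase.cpow_const (one_sub_conj_mul_mem_slitPlane_s17 hz hω)).const_mul _

lemma differentiableOn_testFnS (p : ℝ) {z : ℂ} (hz : ‖z‖ < 1) :
    DifferentiableOn ℂ (testFnS p z) unitDisk := fun _ hω =>
  (hasDerivAt_testFnS p hz (mem_ball_zero_iff.mp hω)).differentiableAt.differentiableWithinAt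

lemma norm_deriv_testFnS_rpow {p : ℝ} (hp : p ≠ 0) {z ω : ℂ} (hz : ‖z‖ < 1) (hω : ‖ω‖ < 1) :
    ‖deriv (testFnS p z) ω‖ ^ p =
      (|2 / p - 1| * ‖z‖) ^ p * ((1 - ‖z‖ ^ 2) / ‖1 - (starRingEnd ℂ) z * ω‖ ^ 2) := by
  have hz2 : 0 ≤ 1 - ‖z‖ ^ 2 := sub_nonneg.mpr (pow_le_one₀ (norm_nonneg z) hz.le)
  have hpos : 0 < ‖1 - (starRingEnd ℂ) z * ω‖ :=
    norm_pos_iff.mpr (Complex.slitPlane_ne_zero (one_sub_conj_mul_mem_slitPlane_s17 hz hω))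
  have hnorm : ‖deriv (testFnS p z) ω‖ = (1 - ‖z‖ ^ 2) ^ (1 / p) *
      ((|2 / p - 1| * ‖z‖) * ‖1 - (starRingEnd ℂ) z * ω‖ ^ (-(2 / p))) := by
    rw [(hasDerivAt_testFnS p hz hω).deriv]
    simp only [norm_mul, norm_neg, RCLike.norm_conj, Complex.norm_cpow_real, Complex.norm_real,
      Real.norm_eq_abs, abs_of_nonneg (Real.rpow_nonneg hz2 _)]
    ring
  have hexp : -(2 / p) * p = -(2 : ℕ) := by
    push_cast
    field_simp
  rw [hnorm, Real.mul_rpow (by positivity) (by positivity),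
    Real.mul_rpow (by positivity) (by positivity), one_div, Real.rpow_inv_rpow hz2 hp,
    ← Real.rpow_mul hpos.le, hexp, Real.rpow_neg hpos.le, Real.rpow_natCast]
  ring

lemma hardySup_deriv_testFnS_le {p : ℝ} (hp : 0 < p) {z : ℂ} (hz : ‖z‖ < 1) :
    hardySup p (deriv (testFnS p z)) ≤ ENNReal.ofReal (|2 / p - 1| ^ p) := by
  refine iSup_le fun ⟨r, hr0, hr1⟩ => ?_
  have hnorm_lt {ζ : ℂ} (hζ : ‖ζ‖ ≤ 1) : ‖(r : ℂ) * ζ‖ < 1 := by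
    rw [norm_mul, Complex.norm_of_nonneg hr0]
    exact mul_lt_one_of_nonneg_of_lt_one_left hr0 hr1 hζ
  refine hardyLintegral_le_of_le_poissonKernel (by positivity) (hnorm_lt hz.le) fun ξ hξ => ?_
  have hz2 : 0 ≤ 1 - ‖z‖ ^ 2 := sub_nonneg.mpr (pow_le_one₀ (norm_nonneg z) hz.le)
  rw [norm_deriv_testFnS_rpow hp.ne' hz (hnorm_lt hξ.le)]
  gcongr
  · exact mul_le_of_le_one_right (abs_nonneg _) hz.le
  · exact one_sub_norm_sq_div_le_poissonKernel ((abs_of_nonneg hr0).trans_le hr1.le) hξ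

lemma norm_testFnS_zero_le_one {p : ℝ} (hp : 0 ≤ p) {z : ℂ} (hz : ‖z‖ ≤ 1) :
    ‖testFnS p z 0‖ ≤ 1 := by
  have hz2 : 0 ≤ 1 - ‖z‖ ^ 2 := sub_nonneg.mpr (pow_le_one₀ (norm_nonneg z) hz)
  simp only [testFnS, mul_zero, sub_zero, Complex.one_cpow, div_one]
  rw [Complex.norm_of_nonneg (by positivity)]
  exact Real.rpow_le_one hz2 (sub_le_self 1 (sq_nonneg _)) (by positivity)

lemma testFnS_self (p : ℝ) {z : ℂ} (hz : ‖z‖ < 1) :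
    testFnS p z z = ((1 / (1 - ‖z‖ ^ 2) ^ (1 / p - 1) : ℝ) : ℂ) := by
  have hz2 : 0 < 1 - ‖z‖ ^ 2 := sub_pos.mpr (pow_lt_one₀ (norm_nonneg z) hz two_ne_zero)
  have hbase : 1 - (starRingEnd ℂ) z * z = ((1 - ‖z‖ ^ 2 : ℝ) : ℂ) := by
    rw [Complex.conj_mul']
    push_cast
    rfl
  rw [testFnS, hbase, ← Complex.ofReal_cpow hz2.le, ← Complex.ofReal_div, ← Real.rpow_sub hz2,
    one_div (_ ^ _), ← Real.rpow_neg hz2.le]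
  ring_nf

theorem testFnS_bounded_general (p : ℝ) (hp : 0 < p) :
    ∃ C : ℝ, 0 < C ∧ ∀ z ∈ unitDisk,
      MemS p (testFnS p z) ∧
      sNorm p (testFnS p z) ≤ C ∧
      testFnS p z z = ((1 / (1 - ‖z‖ ^ 2) ^ (1 / p - 1) : ℝ) : ℂ) := by
  refine ⟨1 + |2 / p - 1|, by positivity, fun z hz => ?_⟩
  have hz1 : ‖z‖ < 1 := mem_ball_zero_iff.mp hz
  have hsup := hardySup_deriv_testFnS_le hp hz1
  exact ⟨⟨differentiableOn_testFnS p hz1, hsup.trans_lt ENNReal.ofReal_lt_top⟩,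
    sNorm_le_add hp (abs_nonneg _) (norm_testFnS_zero_le_one hp.le hz1.le) hsup,
    testFnS_self p hz1⟩

/-- For `0 < p < 1`, the test functions `f_z` have uniformly bounded `S^p` norm, with
`f_z(z) = (1-|z|²)^{-(1/p-1)}`. -/
theorem testFnS_bounded (p : ℝ) (hp : 0 < p) (hp1 : p < 1) :
    ∃ C : ℝ, 0 < C ∧ ∀ z ∈ unitDisk,
      MemS p (testFnS p z) ∧
      sNorm p (testFnS p z) ≤ C ∧
      testFnS p z z = ((1 / (1 - ‖z‖ ^ 2) ^ (1 / p - 1) : ℝ) : ℂ) :=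
  testFnS_bounded_general p hp
end
end

section
/- Let 0 < p < 1. Then there is a constant C > 0 such that for every f in the derivative Hardy space S^p and every z ∈ 𝔻, |f(z)| ≤ C ‖f‖_{S^p} / (1-|z|²)^{1/p-1}. -/
open MeasureTheory Metric Set Filter Topology ENNReal

noncomputable section

/-!
For `f` analytic near a closed disk, dividing out the zeros of `f` shows that `log |f|` is at most
its own Poisson average over the boundary circle. Since `x ^ p = exp (p log x)` lies above its
tangent line in the variable `log x`, the same holds for `|f| ^ p`, for every `p > 0`. Bounding the
Poisson kernel of radius `r` at `w` by `(r + |w|) / (r - |w|)` and letting `r → 1` gives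
`|f' w| ≤ (2 / (1 - |w|)) ^ (1 / p) ‖f'‖_{H^p}`, and integrating along the radius to `z` lowers the
exponent `1 / p` by one.
-/

section PoissonJensen

variable {c u w : ℂ} {R : ℝ} {f : ℂ → ℂ}

lemma sq_norm_sq_sub_conj_mul (R : ℝ) (a b : ℂ) :
    ‖(R : ℂ) ^ 2 - starRingEnd ℂ a * b‖ ^ 2 =
      (R * ‖b - a‖) ^ 2 + (R ^ 2 - ‖a‖ ^ 2) * (R ^ 2 - ‖b‖ ^ 2) := by
  rw [mul_pow]
  simp only [← Complex.normSq_eq_norm_sq, Complex.normSq_apply, ← Complex.ofReal_pow,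
    Complex.sub_re, Complex.sub_im, Complex.mul_re, Complex.mul_im, Complex.conj_re,
    Complex.conj_im, Complex.ofReal_re, Complex.ofReal_im]
  ring

lemma sq_sub_conj_mul_ne_zero {a b : ℂ} (ha : ‖a‖ < R) (hb : ‖b‖ ≤ R) :
    (R : ℂ) ^ 2 - starRingEnd ℂ a * b ≠ 0 := by
  have hR : 0 < R := (norm_nonneg a).trans_lt ha
  have norm_lt : ‖starRingEnd ℂ a * b‖ < ‖(R : ℂ) ^ 2‖ := by
    rw [norm_mul, RCLike.norm_conj, norm_pow, Complex.norm_real, Real.norm_of_nonneg hR.le, sq]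
    exact mul_lt_mul_of_nonneg_of_pos ha hb (norm_nonneg a) hR
  exact sub_ne_zero.2 fun h ↦ norm_lt.ne' (congrArg norm h)

lemma poissonKernel_nonneg_s18 {z : ℂ} (hw : w ∈ ball c R) (hz : z ∈ sphere c R) :
    0 ≤ poissonKernel c w z := by
  rw [mem_ball_iff_norm] at hw
  rw [mem_sphere_iff_norm] at hz
  rw [poissonKernel_def, hz]
  have : ‖w - c‖ ^ 2 ≤ R ^ 2 := by gcongr
  exact div_nonneg (sub_nonneg.2 this) (sq_nonneg _)

lemma poissonKernel_le {z : ℂ} (hw : w ∈ ball c R) (hz : z ∈ sphere c R) :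
    poissonKernel c w z ≤ (R + ‖w - c‖) / (R - ‖w - c‖) := by
  rw [poissonKernel_eq_re_herglotzRieszKernel, Function.comp_apply, herglotzRieszKernel_def]
  exact re_herglotzRieszKernel_le hz hw

lemma continuousOn_poissonKernel_sphere (hw : w ∈ ball c R) :
    ContinuousOn (poissonKernel c w) (sphere c |R|) := by
  rw [poissonKernel_eq_re_herglotzRieszKernel]
  exact Complex.continuous_re.comp_continuousOn (continuousOn_herglotzRieszKernel_sphere hw)

lemma circleAverage_poissonKernel_smul_const (hw : w ∈ ball c R) (a : ℝ) :
    Real.circleAverage (poissonKernel c w • fun _ ↦ a) c R = a :=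
  InnerProductSpace.HarmonicOnNhd.circleAverage_poissonKernel_smul
    (fun _ _ ↦ InnerProductSpace.harmonicAt_const a) hw

lemma circleAverage_mono_codiscreteWithin {f₁ f₂ : ℂ → ℝ}
    (hf₁ : CircleIntegrable f₁ c R) (hf₂ : CircleIntegrable f₂ c R) (hR : R ≠ 0)
    (h : f₁ ≤ᶠ[codiscreteWithin (sphere c |R|)] f₂) :
    Real.circleAverage f₁ c R ≤ Real.circleAverage f₂ c R := by
  have h_inf : f₁ =ᶠ[codiscreteWithin (sphere c |R|)] f₁ ⊓ f₂ := by
    filter_upwards [h] with z hz using (inf_eq_left.2 hz).symm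
  rw [Real.circleAverage_congr_codiscreteWithin h_inf hR]
  exact Real.circleAverage_mono (hf₁.congr_codiscreteWithin h_inf) hf₂ fun _ _ ↦ inf_le_right

-- Replacing `z - u` by `(R ^ 2 - conj (u - c) * (z - c)) / R`, which has no zero in the disk, keeps
-- the absolute value on the circle and increases it inside.
lemma log_norm_sub_le_circleAverage_of_mem_ball (hw : w ∈ ball c R) (hu : u ∈ ball c R)
    (hwu : w ≠ u) :
    Real.log ‖w - u‖ ≤
      Real.circleAverage (poissonKernel c w • (Real.log ‖· - u‖)) c R := by
  have hR : 0 < R := pos_of_mem_ball hw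
  rw [mem_ball_iff_norm] at hu
  set h : ℂ → ℂ := fun z ↦ ((R : ℂ) ^ 2 - starRingEnd ℂ (u - c) * (z - c)) / R with h_def
  have h_ne_zero : ∀ z ∈ closedBall c R, h z ≠ 0 := fun z hz ↦
    div_ne_zero (sq_sub_conj_mul_ne_zero hu (mem_closedBall_iff_norm.1 hz))
      (Complex.ofReal_ne_zero.2 hR.ne')
  have sq_norm_h (z : ℂ) : ‖h z‖ ^ 2 =
      ‖z - u‖ ^ 2 + (R ^ 2 - ‖u - c‖ ^ 2) * (R ^ 2 - ‖z - c‖ ^ 2) / R ^ 2 := by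
    rw [h_def, norm_div, div_pow, sq_norm_sq_sub_conj_mul, Complex.norm_real,
      Real.norm_of_nonneg hR.le, sub_sub_sub_cancel_right]
    field_simp
  have h_sphere : ∀ z ∈ sphere c |R|, ‖h z‖ = ‖z - u‖ := by
    intro z hz
    rw [abs_of_pos hR, mem_sphere_iff_norm] at hz
    rw [← sq_eq_sq₀ (norm_nonneg _) (norm_nonneg _), sq_norm_h, hz, sub_self, mul_zero, zero_div,
      add_zero]
  have h_w : ‖w - u‖ ≤ ‖h w‖ := by
    rw [← sq_le_sq₀ (norm_nonneg _) (norm_nonneg _), sq_norm_h]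
    have hu_nonneg : 0 ≤ R ^ 2 - ‖u - c‖ ^ 2 := sub_nonneg.2 (by gcongr)
    have hw_nonneg : 0 ≤ R ^ 2 - ‖w - c‖ ^ 2 :=
      sub_nonneg.2 (by gcongr; exact (mem_ball_iff_norm.1 hw).le)
    exact le_add_of_nonneg_right (by positivity)
  calc Real.log ‖w - u‖
      ≤ Real.log ‖h w‖ := Real.log_le_log (norm_pos_iff.2 (sub_ne_zero.2 hwu)) h_w
    _ = Real.circleAverage (poissonKernel c w • (Real.log ‖h ·‖)) c R :=
        (InnerProductSpace.HarmonicOnNhd.circleAverage_poissonKernel_smul (fun z hz ↦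
          AnalyticAt.harmonicAt_log_norm (by fun_prop) (h_ne_zero z hz)) hw).symm
    _ = Real.circleAverage (poissonKernel c w • (Real.log ‖· - u‖)) c R :=
        Real.circleAverage_congr_sphere fun z hz ↦ by simp [h_sphere z hz]

lemma log_norm_sub_le_circleAverage_poissonKernel_smul (hw : w ∈ ball c R)
    (hu : u ∈ closedBall c R) (hwu : w ≠ u) :
    Real.log ‖w - u‖ ≤
      Real.circleAverage (poissonKernel c w • (Real.log ‖· - u‖)) c R := by
  rcases (mem_closedBall.1 hu).lt_or_eq with hu_ball | hu_sphere
  · exact log_norm_sub_le_circleAverage_of_mem_ball hw hu_ball hwu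
  · rw [poissonKernel_eq_re_herglotzRieszKernel]
    exact (circleAverage_re_herglotzRieszKernel_mul_log hu_sphere hw).ge

lemma exists_finset_eqOn_prod_pow_smul {𝕜 E : Type*} [NontriviallyNormedField 𝕜]
    [NormedAddCommGroup E] [NormedSpace 𝕜 E] {U : Set 𝕜} {f : 𝕜 → E} {w : 𝕜}
    (hU_compact : IsCompact U) (hU_conn : IsPreconnected U) (hU_nontrivial : U.Nontrivial)
    (hf : AnalyticOnNhd 𝕜 f U) (hw : w ∈ U) (hfw : f w ≠ 0) :
    ∃ (s : Finset 𝕜) (n : 𝕜 → ℕ) (g : 𝕜 → E), (∀ u ∈ s, u ∈ U ∧ n u ≠ 0) ∧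
      AnalyticOnNhd 𝕜 g U ∧ (∀ z ∈ U, g z ≠ 0) ∧
      EqOn f (fun z ↦ (∏ u ∈ s, (z - u) ^ n u) • g z) U := by
  set D := MeromorphicOn.divisor f U
  have hD : (Function.support D).Finite := D.finiteSupport hU_compact
  have toNat_D (u : 𝕜) : ((D u).toNat : ℤ) = D u :=
    Int.toNat_of_nonneg (MeromorphicOn.AnalyticOnNhd.divisor_nonneg hf u)
  have order_ne_top (u : U) : meromorphicOrderAt f u ≠ ⊤ := by
    refine hf.meromorphicOn.meromorphicOrderAt_ne_top_of_isPreconnected hU_conn hw u.2 ?_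
    rw [(hf w hw).meromorphicOrderAt_eq, analyticOrderAt_eq_zero.2 (Or.inr hfw)]
    exact WithTop.coe_ne_top
  obtain ⟨g, hg, hg_ne, hfg⟩ := hf.meromorphicOn.extract_zeros_poles order_ne_top hD
  have prod_eq : ∏ᶠ u, (· - u) ^ D u = fun z ↦ ∏ u ∈ hD.toFinset, (z - u) ^ (D u).toNat := by
    rw [finprod_eq_prod_of_mulSupport_subset (s := hD.toFinset)]
    · ext z
      simp only [Finset.prod_apply, Pi.pow_apply, ← zpow_natCast, toNat_D]
    · intro u
      contrapose!
      simp +contextual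
  rw [prod_eq] at hfg
  refine ⟨hD.toFinset, fun u ↦ (D u).toNat, g, fun u hu ↦ ⟨?_, fun (h : (D u).toNat = 0) ↦ ?_⟩, hg,
    fun z hz ↦ hg_ne ⟨z, hz⟩, fun z hz ↦ ?_⟩
  · exact D.supportWithinDomain (hD.mem_toFinset.1 hu)
  · exact hD.mem_toFinset.1 hu (by rw [← toNat_D, h, Nat.cast_zero])
  · have h_analytic : AnalyticAt 𝕜
        ((fun z ↦ ∏ u ∈ hD.toFinset, (z - u) ^ (D u).toNat) • g) z :=
      AnalyticAt.smul (by fun_prop) (hg z hz)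
    have h_punctured := (hf z hz).meromorphicAt.eventuallyEq_nhdsNE_of_eventuallyEq_codiscreteWithin
      h_analytic.meromorphicAt hz (hU_conn.preperfect_of_nontrivial hU_nontrivial z hz) hfg
    exact (((hf z hz).continuousAt.eventuallyEq_nhds_iff_eventuallyEq_nhdsNE
      h_analytic.continuousAt).1 h_punctured).eq_of_nhds

lemma log_norm_prod_pow_smul {𝕜 E : Type*} [NormedField 𝕜] [NormedAddCommGroup E]
    [NormedSpace 𝕜 E] {s : Finset 𝕜} {n : 𝕜 → ℕ} {a : E} {z : 𝕜}
    (h : (∏ u ∈ s, (z - u) ^ n u) • a ≠ 0) :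
    Real.log ‖(∏ u ∈ s, (z - u) ^ n u) • a‖ =
      ∑ u ∈ s, n u * Real.log ‖z - u‖ + Real.log ‖a‖ := by
  obtain ⟨h_prod, ha⟩ := smul_ne_zero_iff.1 h
  rw [norm_smul, Real.log_mul (norm_ne_zero_iff.2 h_prod) (norm_ne_zero_iff.2 ha), norm_prod,
    Real.log_prod fun u hu ↦ norm_ne_zero_iff.2 (Finset.prod_ne_zero_iff.1 h_prod u hu)]
  simp only [norm_pow, Real.log_pow]

section NormedSpace

variable {E : Type*} [NormedAddCommGroup E] [NormedSpace ℂ E] {f g : ℂ → E}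

lemma eventually_codiscreteWithin_sphere_ne_zero (hf : AnalyticOnNhd ℂ f (closedBall c R))
    (hw : w ∈ closedBall c R) (hfw : f w ≠ 0) :
    ∀ᶠ z in codiscreteWithin (sphere c R), f z ≠ 0 :=
  codiscreteWithin_mono sphere_subset_closedBall
    (hf.preimage_zero_mem_codiscreteWithin hfw hw
      ⟨⟨w, hw⟩, (convex_closedBall c R).isPreconnected⟩)

lemma circleIntegrable_poissonKernel_smul_log_norm (hf : AnalyticOnNhd ℂ f (closedBall c R))
    (hw : w ∈ ball c R) :
    CircleIntegrable (poissonKernel c w • (Real.log ‖f ·‖)) c R := by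
  refine (MeromorphicOn.circleIntegrable_log_norm ?_).continuousOn_smul
    (continuousOn_poissonKernel_sphere hw)
  rw [abs_of_pos (pos_of_mem_ball hw)]
  exact hf.meromorphicOn.mono_set sphere_subset_closedBall

lemma circleAverage_poissonKernel_smul_log_norm_eq_sum_add {s : Finset ℂ} {n : ℂ → ℕ}
    (hf : AnalyticOnNhd ℂ f (closedBall c R)) (hg : AnalyticOnNhd ℂ g (closedBall c R))
    (hw : w ∈ ball c R) (hfw : f w ≠ 0)
    (hfg : EqOn f (fun z ↦ (∏ u ∈ s, (z - u) ^ n u) • g z) (closedBall c R)) :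
    Real.circleAverage (poissonKernel c w • (Real.log ‖f ·‖)) c R =
      ∑ u ∈ s, n u * Real.circleAverage (poissonKernel c w • (Real.log ‖· - u‖)) c R +
        Real.circleAverage (poissonKernel c w • (Real.log ‖g ·‖)) c R := by
  have h_int (u : ℂ) :
      CircleIntegrable ((n u : ℝ) • poissonKernel c w • (Real.log ‖· - u‖)) c R :=
    (circleIntegrable_poissonKernel_smul_log_norm (f := (· - u)) (fun z _ ↦ by fun_prop)
      hw).const_smul
  calc Real.circleAverage (poissonKernel c w • (Real.log ‖f ·‖)) c R
      = Real.circleAverage (∑ u ∈ s, (n u : ℝ) • poissonKernel c w • (Real.log ‖· - u‖) +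
          poissonKernel c w • (Real.log ‖g ·‖)) c R := by
        refine Real.circleAverage_congr_codiscreteWithin ?_ (pos_of_mem_ball hw).ne'
        rw [abs_of_pos (pos_of_mem_ball hw)]
        filter_upwards [eventually_codiscreteWithin_sphere_ne_zero hf
          (ball_subset_closedBall hw) hfw, self_mem_codiscreteWithin (sphere c R)] with z hfz hz
        rw [hfg (sphere_subset_closedBall hz)] at hfz
        simp only [Pi.add_apply, Finset.sum_apply, Pi.smul_apply, Pi.mul_apply, smul_eq_mul,
          hfg (sphere_subset_closedBall hz), log_norm_prod_pow_smul hfz, mul_add, Finset.mul_sum,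
          mul_left_comm]
    _ = ∑ u ∈ s, n u * Real.circleAverage (poissonKernel c w • (Real.log ‖· - u‖)) c R +
          Real.circleAverage (poissonKernel c w • (Real.log ‖g ·‖)) c R := by
        rw [Real.circleAverage_add (CircleIntegrable.sum _ fun u _ ↦ h_int u)
            (circleIntegrable_poissonKernel_smul_log_norm hg hw),
          Real.circleAverage_sum fun u _ ↦ h_int u]
        simp only [Real.circleAverage_smul, smul_eq_mul]

end NormedSpace

lemma log_norm_le_circleAverage_poissonKernel_smul (hf : AnalyticOnNhd ℂ f (closedBall c R))
    (hw : w ∈ ball c R) (hfw : f w ≠ 0) :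
    Real.log ‖f w‖ ≤ Real.circleAverage (poissonKernel c w • (Real.log ‖f ·‖)) c R := by
  have hw' : w ∈ closedBall c R := ball_subset_closedBall hw
  obtain ⟨s, n, g, hs, hg, hg_ne, hfg⟩ := exists_finset_eqOn_prod_pow_smul
    (isCompact_closedBall c R) (convex_closedBall c R).isPreconnected
    (infinite_of_mem_nhds c (closedBall_mem_nhds c (pos_of_mem_ball hw))).nontrivial hf hw' hfw
  have ne_of_mem : ∀ u ∈ s, w ≠ u := by
    rintro u hu rfl
    exact hfw (by simp [hfg hw', Finset.prod_eq_zero hu, (hs w hu).2])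
  calc Real.log ‖f w‖
      = ∑ u ∈ s, n u * Real.log ‖w - u‖ + Real.log ‖g w‖ := by
        rw [hfg hw'] at hfw ⊢
        exact log_norm_prod_pow_smul hfw
    _ ≤ ∑ u ∈ s, n u * Real.circleAverage (poissonKernel c w • (Real.log ‖· - u‖)) c R +
          Real.circleAverage (poissonKernel c w • (Real.log ‖g ·‖)) c R := by
        gcongr with u hu
        · exact log_norm_sub_le_circleAverage_poissonKernel_smul hw (hs u hu).1 (ne_of_mem u hu)
        · exact (InnerProductSpace.HarmonicOnNhd.circleAverage_poissonKernel_smul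
            (fun z hz ↦ (hg z hz).harmonicAt_log_norm (hg_ne z hz)) hw).ge
    _ = Real.circleAverage (poissonKernel c w • (Real.log ‖f ·‖)) c R :=
        (circleAverage_poissonKernel_smul_log_norm_eq_sum_add hf hg hw hfw hfg).symm

lemma rpow_mul_one_add_log_sub_le {a b p : ℝ} (ha : 0 < a) (hb : 0 < b) :
    a ^ p * (1 + p * (Real.log b - Real.log a)) ≤ b ^ p := by
  calc a ^ p * (1 + p * (Real.log b - Real.log a))
      ≤ a ^ p * Real.exp (p * (Real.log b - Real.log a)) := by
        gcongr
        rw [add_comm]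
        exact Real.add_one_le_exp _
    _ = b ^ p := by
        rw [Real.rpow_def_of_pos ha, Real.rpow_def_of_pos hb, ← Real.exp_add]
        ring_nf

lemma circleIntegrable_rpow_norm {E : Type*} [NormedAddCommGroup E] {g : ℂ → E} {p : ℝ}
    (hp : 0 ≤ p) (hg : ContinuousOn g (sphere c |R|)) : CircleIntegrable (‖g ·‖ ^ p) c R :=
  (hg.norm.rpow_const fun _ _ ↦ Or.inr hp).circleIntegrable'

lemma rpow_norm_le_circleAverage_of_ne_zero {p : ℝ} (hp : 0 ≤ p)
    (hf : AnalyticOnNhd ℂ f (closedBall c R)) (hw : w ∈ ball c R) (hfw : f w ≠ 0) :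
    ‖f w‖ ^ p ≤ Real.circleAverage (poissonKernel c w • (‖f ·‖ ^ p)) c R := by
  have hR : |R| = R := abs_of_pos (pos_of_mem_ball hw)
  have hP : ContinuousOn (poissonKernel c w) (sphere c |R|) := continuousOn_poissonKernel_sphere hw
  set m := ‖f w‖ ^ p
  set b := m * (1 - p * Real.log ‖f w‖) with hb
  have h_const : CircleIntegrable (poissonKernel c w • fun _ ↦ b) c R :=
    (circleIntegrable_const b c R).continuousOn_smul hP
  have h_log : CircleIntegrable ((m * p) • poissonKernel c w • (Real.log ‖f ·‖)) c R :=
    (circleIntegrable_poissonKernel_smul_log_norm hf hw).const_smul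
  have h_rpow : CircleIntegrable (poissonKernel c w • (‖f ·‖ ^ p)) c R :=
    (circleIntegrable_rpow_norm hp (hf.continuousOn.mono
      (hR.symm ▸ sphere_subset_closedBall))).continuousOn_smul hP
  calc m
      = b + (m * p) • Real.log ‖f w‖ := by rw [hb, smul_eq_mul]; ring
    _ ≤ b + (m * p) • Real.circleAverage (poissonKernel c w • (Real.log ‖f ·‖)) c R := by
        gcongr
        exact log_norm_le_circleAverage_poissonKernel_smul hf hw hfw
    _ = Real.circleAverage ((poissonKernel c w • fun _ ↦ b) +
          (m * p) • poissonKernel c w • (Real.log ‖f ·‖)) c R := by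
        rw [Real.circleAverage_add h_const h_log, circleAverage_poissonKernel_smul_const hw,
          Real.circleAverage_smul]
    _ ≤ Real.circleAverage (poissonKernel c w • (‖f ·‖ ^ p)) c R := by
        refine circleAverage_mono_codiscreteWithin (h_const.add h_log) h_rpow
          (pos_of_mem_ball hw).ne' ?_
        rw [hR]
        filter_upwards [eventually_codiscreteWithin_sphere_ne_zero hf
          (ball_subset_closedBall hw) hfw, self_mem_codiscreteWithin (sphere c R)] with z hfz hz
        calc poissonKernel c w z * b + m * p * (poissonKernel c w z * Real.log ‖f z‖)
            = poissonKernel c w z * (m * (1 + p * (Real.log ‖f z‖ - Real.log ‖f w‖))) := by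
              rw [hb]; ring
          _ ≤ poissonKernel c w z * ‖f z‖ ^ p :=
              mul_le_mul_of_nonneg_left
                (rpow_mul_one_add_log_sub_le (norm_pos_iff.2 hfw) (norm_pos_iff.2 hfz))
                (poissonKernel_nonneg_s18 hw hz)

lemma rpow_norm_le_circleAverage_poissonKernel_smul {p : ℝ} (hp : 0 < p)
    (hf : AnalyticOnNhd ℂ f (closedBall c R)) (hw : w ∈ ball c R) :
    ‖f w‖ ^ p ≤ Real.circleAverage (poissonKernel c w • (‖f ·‖ ^ p)) c R := by
  rcases eq_or_ne (f w) 0 with hfw | hfw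
  · rw [hfw, norm_zero, Real.zero_rpow hp.ne']
    refine Real.circleAverage_nonneg_of_nonneg fun z hz ↦ ?_
    rw [abs_of_pos (pos_of_mem_ball hw)] at hz
    exact mul_nonneg (poissonKernel_nonneg_s18 hw hz) (Real.rpow_nonneg (norm_nonneg _) p)
  · exact rpow_norm_le_circleAverage_of_ne_zero hp.le hf hw hfw

lemma rpow_norm_le_mul_circleAverage {p : ℝ} (hp : 0 < p)
    (hf : AnalyticOnNhd ℂ f (closedBall c R)) (hw : w ∈ ball c R) :
    ‖f w‖ ^ p ≤ (R + ‖w - c‖) / (R - ‖w - c‖) * Real.circleAverage (‖f ·‖ ^ p) c R := by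
  have hR : |R| = R := abs_of_pos (pos_of_mem_ball hw)
  have h_int : CircleIntegrable (‖f ·‖ ^ p) c R :=
    circleIntegrable_rpow_norm hp.le (hf.continuousOn.mono (hR.symm ▸ sphere_subset_closedBall))
  set K := (R + ‖w - c‖) / (R - ‖w - c‖)
  calc ‖f w‖ ^ p
      ≤ Real.circleAverage (poissonKernel c w • (‖f ·‖ ^ p)) c R :=
        rpow_norm_le_circleAverage_poissonKernel_smul hp hf hw
    _ ≤ Real.circleAverage (K • (‖f ·‖ ^ p)) c R := by
        refine Real.circleAverage_mono (h_int.continuousOn_smul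
          (continuousOn_poissonKernel_sphere hw)) h_int.const_smul fun z hz ↦ ?_
        rw [hR] at hz
        exact mul_le_mul_of_nonneg_right (poissonKernel_le hw hz)
          (Real.rpow_nonneg (norm_nonneg _) p)
    _ = K * Real.circleAverage (‖f ·‖ ^ p) c R := Real.circleAverage_smul

end PoissonJensen

section HardySpace

variable {p r : ℝ} {f : ℂ → ℂ} {z : ℂ}

lemma hardyLintegral_eq_ofReal_circleAverage (h : CircleIntegrable (‖f ·‖ ^ p) 0 r) :
    hardyLintegral p f r = ENNReal.ofReal (Real.circleAverage (‖f ·‖ ^ p) 0 r) := by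
  have h_nonneg : ∀ θ, 0 ≤ ‖f (circleMap 0 r θ)‖ ^ p := fun θ ↦ Real.rpow_nonneg (norm_nonneg _) p
  rw [Real.circleAverage_def, smul_eq_mul, ENNReal.ofReal_mul (by positivity),
    intervalIntegral.integral_of_le Real.two_pi_pos.le,
    ofReal_integral_eq_lintegral_ofReal h.1 (ae_of_all _ h_nonneg), hardyLintegral, circleMeasure,
    lintegral_smul_measure, smul_eq_mul]
  simp only [circleMap, zero_add]

lemma circleAverage_rpow_norm_le_toReal_hardySup (hp : 0 ≤ p) (hf : ContinuousOn f unitDisk)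
    (hH : hardySup p f ≠ ⊤) (hr : 0 ≤ r) (hr1 : r < 1) :
    Real.circleAverage (‖f ·‖ ^ p) 0 r ≤ (hardySup p f).toReal := by
  have h_sphere : sphere (0 : ℂ) |r| ⊆ unitDisk := by
    rw [abs_of_nonneg hr]
    exact sphere_subset_ball hr1
  rw [← ENNReal.ofReal_le_iff_le_toReal hH,
    ← hardyLintegral_eq_ofReal_circleAverage (circleIntegrable_rpow_norm hp (hf.mono h_sphere))]
  exact le_iSup (fun r : Ico (0 : ℝ) 1 ↦ hardyLintegral p f r) ⟨r, hr, hr1⟩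

lemma rpow_norm_le_mul_toReal_hardySup (hp : 0 < p) (hf : DifferentiableOn ℂ f unitDisk)
    (hH : hardySup p f ≠ ⊤) (hz : z ∈ unitDisk) :
    ‖f z‖ ^ p ≤ (1 + ‖z‖) / (1 - ‖z‖) * (hardySup p f).toReal := by
  have hz1 : ‖z‖ < 1 := mem_ball_zero_iff.1 hz
  have h_lim : Tendsto (fun r : ℝ ↦ (r + ‖z‖) / (r - ‖z‖) * (hardySup p f).toReal) (𝓝[<] 1)
      (𝓝 ((1 + ‖z‖) / (1 - ‖z‖) * (hardySup p f).toReal)) := by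
    refine Tendsto.mono_left (ContinuousAt.tendsto ?_) nhdsWithin_le_nhds
    fun_prop (disch := exact (sub_pos.2 hz1).ne')
  refine ge_of_tendsto h_lim ?_
  filter_upwards [Ioo_mem_nhdsLT hz1] with r ⟨hzr, hr1⟩
  have h_analytic : AnalyticOnNhd ℂ f (closedBall 0 r) :=
    (hf.analyticOnNhd isOpen_ball).mono (closedBall_subset_ball hr1)
  calc ‖f z‖ ^ p
      ≤ (r + ‖z‖) / (r - ‖z‖) * Real.circleAverage (‖f ·‖ ^ p) 0 r := by
        simpa using rpow_norm_le_mul_circleAverage hp h_analytic (mem_ball_zero_iff.2 hzr)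
    _ ≤ (r + ‖z‖) / (r - ‖z‖) * (hardySup p f).toReal := by
        have hr : 0 ≤ r := (norm_nonneg z).trans hzr.le
        have := sub_pos.2 hzr
        gcongr
        exact circleAverage_rpow_norm_le_toReal_hardySup hp.le hf.continuousOn hH hr hr1

lemma norm_le_mul_rpow_one_sub_norm (hp : 0 < p) (hf : DifferentiableOn ℂ f unitDisk)
    (hH : hardySup p f ≠ ⊤) (hz : z ∈ unitDisk) :
    ‖f z‖ ≤ 2 ^ (1 / p) * (hardySup p f).toReal ^ (1 / p) * (1 - ‖z‖) ^ (-(1 / p)) := by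
  have hz1 : 0 < 1 - ‖z‖ := sub_pos.2 (mem_ball_zero_iff.1 hz)
  have h_rpow : ‖f z‖ ^ p ≤ 2 * (hardySup p f).toReal / (1 - ‖z‖) := by
    calc ‖f z‖ ^ p
        ≤ (1 + ‖z‖) / (1 - ‖z‖) * (hardySup p f).toReal :=
          rpow_norm_le_mul_toReal_hardySup hp hf hH hz
      _ ≤ 2 / (1 - ‖z‖) * (hardySup p f).toReal := by gcongr; linarith
      _ = 2 * (hardySup p f).toReal / (1 - ‖z‖) := by ring
  calc ‖f z‖
      = (‖f z‖ ^ p) ^ (1 / p) := by rw [one_div, Real.rpow_rpow_inv (norm_nonneg _) hp.ne']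
    _ ≤ (2 * (hardySup p f).toReal / (1 - ‖z‖)) ^ (1 / p) := by gcongr
    _ = 2 ^ (1 / p) * (hardySup p f).toReal ^ (1 / p) * (1 - ‖z‖) ^ (-(1 / p)) := by
        rw [Real.div_rpow (by positivity) hz1.le, Real.mul_rpow two_pos.le ENNReal.toReal_nonneg,
          Real.rpow_neg hz1.le, div_eq_mul_inv]

end HardySpace

lemma hasDerivAt_one_sub_mul_rpow_neg_div {a t b : ℝ} (ha : a ≠ 0) (ht : t * b < 1) :
    HasDerivAt (fun t ↦ (1 - t * b) ^ (-a) / a) (b * (1 - t * b) ^ (-a - 1)) t := by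
  have h_sub : HasDerivAt (fun t ↦ 1 - t * b) (-b) t := by
    simpa using ((hasDerivAt_id t).mul_const b).const_sub 1
  refine ((h_sub.rpow_const (p := -a) (Or.inl (sub_pos.2 ht).ne')).div_const a).congr_deriv ?_
  field_simp

lemma norm_le_of_norm_fderiv_le_rpow {E F : Type*} [NormedAddCommGroup E] [NormedSpace ℝ E]
    [NormedAddCommGroup F] [NormedSpace ℝ F] {f : E → F} {f' : E → E →L[ℝ] F} {a A : ℝ}
    (ha : 0 < a) (hf : ∀ x ∈ ball 0 1, HasFDerivAt f (f' x) x)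
    (hf' : ∀ x ∈ ball 0 1, ‖f' x‖ ≤ A * (1 - ‖x‖) ^ (-a - 1)) {x : E} (hx : x ∈ ball 0 1) :
    ‖f x‖ ≤ ‖f 0‖ + A * ((1 - ‖x‖) ^ (-a) / a) := by
  have hA : 0 ≤ A := by simpa using (norm_nonneg _).trans (hf' 0 (mem_ball_self one_pos))
  have norm_smul_eq : ∀ t ∈ Icc (0 : ℝ) 1, ‖t • x‖ = t * ‖x‖ := fun t ht ↦ by
    rw [norm_smul, Real.norm_of_nonneg ht.1]
  have smul_mem : ∀ t ∈ Icc (0 : ℝ) 1, t • x ∈ ball 0 1 := fun t ht ↦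
    (convex_ball 0 1).smul_mem_of_zero_mem (mem_ball_self one_pos) hx ht
  have h_deriv : ∀ t ∈ Icc (0 : ℝ) 1, HasDerivAt (fun t : ℝ ↦ f (t • x)) (f' (t • x) x) t :=
    fun t ht ↦ (hf _ (smul_mem t ht)).comp_hasDerivAt t
      (by simpa using (hasDerivAt_id t).smul_const x)
  have h_bound_deriv : ∀ t ∈ Icc (0 : ℝ) 1,
      HasDerivAt (fun t ↦ ‖f 0‖ + A * ((1 - t * ‖x‖) ^ (-a) / a))
        (A * (‖x‖ * (1 - t * ‖x‖) ^ (-a - 1))) t := fun t ht ↦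
    ((hasDerivAt_one_sub_mul_rpow_neg_div ha.ne' (by
      simpa [norm_smul_eq t ht] using smul_mem t ht)).const_mul A).const_add _
  have h_norm_deriv : ∀ t ∈ Ico (0 : ℝ) 1,
      ‖f' (t • x) x‖ ≤ A * (‖x‖ * (1 - t * ‖x‖) ^ (-a - 1)) := fun t ht ↦ by
    have ht' := Ico_subset_Icc_self ht
    calc ‖f' (t • x) x‖
        ≤ A * (1 - ‖t • x‖) ^ (-a - 1) * ‖x‖ :=
          (f' (t • x)).le_of_opNorm_le (hf' _ (smul_mem t ht')) x
      _ = A * (‖x‖ * (1 - t * ‖x‖) ^ (-a - 1)) := by rw [norm_smul_eq t ht']; ring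
  simpa using image_norm_le_of_norm_deriv_right_le_deriv_boundary'
    (fun t ht ↦ (h_deriv t ht).continuousAt.continuousWithinAt)
    (fun t ht ↦ (h_deriv t (Ico_subset_Icc_self ht)).hasDerivWithinAt)
    (by simpa using mul_nonneg hA (inv_nonneg.2 ha.le))
    (fun t ht ↦ (h_bound_deriv t ht).continuousAt.continuousWithinAt)
    (fun t ht ↦ (h_bound_deriv t (Ico_subset_Icc_self ht)).hasDerivWithinAt)
    h_norm_deriv (right_mem_Icc.2 zero_le_one)

lemma one_sub_rpow_neg_le {a t : ℝ} (ha : 0 ≤ a) (ht : 0 ≤ t) (ht1 : t < 1) :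
    (1 - t) ^ (-a) ≤ 2 ^ a / (1 - t ^ 2) ^ a := by
  have h_pos : 0 < 1 - t ^ 2 := by nlinarith
  calc (1 - t) ^ (-a)
      ≤ ((1 - t ^ 2) / 2) ^ (-a) :=
        Real.rpow_le_rpow_of_nonpos (by positivity) (by nlinarith) (neg_nonpos.2 ha)
    _ = 2 ^ a / (1 - t ^ 2) ^ a := by
        rw [Real.rpow_neg (by positivity), Real.div_rpow h_pos.le two_pos.le, inv_div]

lemma MemS.norm_le_norm_zero_add {p : ℝ} {f : ℂ → ℂ} {z : ℂ} (hf : MemS p f) (hp : 0 < p)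
    (hp1 : p < 1) (hz : z ∈ unitDisk) :
    ‖f z‖ ≤ ‖f 0‖ + 2 ^ (1 / p) * (hardySup p (deriv f)).toReal ^ (1 / p) *
      ((1 - ‖z‖) ^ (-(1 / p - 1)) / (1 / p - 1)) := by
  have h_deriv : DifferentiableOn ℂ (deriv f) unitDisk := hf.1.deriv isOpen_ball
  refine norm_le_of_norm_fderiv_le_rpow (f' := fun w ↦ (fderiv ℂ f w).restrictScalars ℝ)
    (sub_pos.2 ((one_lt_div hp).2 hp1)) (fun w hw ↦ ?_) (fun w hw ↦ ?_) hz
  · exact (hf.1.differentiableAt (isOpen_ball.mem_nhds hw)).hasFDerivAt.restrictScalars ℝ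
  · have h_exp : -(1 / p - 1) - 1 = -(1 / p) := by ring
    rw [ContinuousLinearMap.norm_restrictScalars, ← norm_deriv_eq_norm_fderiv, h_exp]
    exact norm_le_mul_rpow_one_sub_norm hp h_deriv hf.2.ne hw

/-- For `0 < p < 1`, every `f ∈ S^p` satisfies the pointwise estimate
`|f(z)| ≤ C ‖f‖_{S^p} (1-|z|²)^{-(1/p-1)}`. -/
theorem pointwise_bound_Sp (p : ℝ) (hp : 0 < p) (hp1 : p < 1) :
    ∃ C : ℝ, 0 < C ∧ ∀ f : ℂ → ℂ, MemS p f → ∀ z ∈ unitDisk,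
      ‖f z‖ ≤ C * sNorm p f / (1 - ‖z‖ ^ 2) ^ (1 / p - 1) := by
  have ha : 0 < 1 / p - 1 := sub_pos.2 ((one_lt_div hp).2 hp1)
  set a := 1 / p - 1
  set K := 2 ^ (1 / p) * 2 ^ a / a
  have hK : 0 ≤ K := by positivity
  refine ⟨1 + K, by positivity, fun f hf z hz ↦ ?_⟩
  have hz1 : ‖z‖ < 1 := mem_ball_zero_iff.1 hz
  set N := (hardySup p (deriv f)).toReal ^ (1 / p)
  set D := (1 - ‖z‖ ^ 2) ^ a
  have hN : 0 ≤ N := by positivity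
  have hD : 0 < D := Real.rpow_pos_of_pos (by nlinarith [norm_nonneg z]) a
  have hD1 : D ≤ 1 :=
    Real.rpow_le_one (by nlinarith [norm_nonneg z]) (sub_le_self 1 (sq_nonneg _)) ha.le
  calc ‖f z‖
      ≤ ‖f 0‖ + 2 ^ (1 / p) * N * ((1 - ‖z‖) ^ (-a) / a) := hf.norm_le_norm_zero_add hp hp1 hz
    _ ≤ ‖f 0‖ / D + 2 ^ (1 / p) * N * (2 ^ a / D / a) := by
        gcongr
        · exact le_div_self (norm_nonneg _) hD hD1
        · exact one_sub_rpow_neg_le ha.le (norm_nonneg z) hz1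
    _ = (‖f 0‖ + K * N) / D := by ring
    _ ≤ (1 + K) * (‖f 0‖ + N) / D := by
        gcongr
        nlinarith [mul_nonneg hK (norm_nonneg (f 0))]
end
end
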